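/- Let G be a directed graph on [n] whose reduced canonical form determines a hierarchical poset P_G. Then G admits the MacWilliams Identity — i.e., for all linear codes C_1, C_2 ⊆ F_q^n, if W^G_{C_1}(X) = W^G_{C_2}(X) then W^{Ḡ}_{C_1^⊥}(X) = W^{Ḡ}_{C_2^⊥}(X) — if and only if G satisfies the Unique Decomposition Property. -/

import Mathlib

/-- The closure of a set of vertices `X` in the directed graph with edge relation `E`. -/
def gclosure {n : ℕ} (E : Fin n → Fin n → Prop) (X : Set (Fin n)) : Set (Fin n) :=
  {v | ∃ u ∈ X, Relation.ReflTransGen E u v}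

/-- The `G`-weight of a word `x`. -/
noncomputable def gweight {n : ℕ} {F : Type*} [Field F] (E : Fin n → Fin n → Prop)
    (x : Fin n → F) : ℕ :=
  (gclosure E {i | x i ≠ 0}).ncard

/-- `u` dominates `v`: `v` is reachable from `u` by a directed path. -/
def gdom {n : ℕ} (E : Fin n → Fin n → Prop) : Fin n → Fin n → Prop :=
  Relation.ReflTransGen E

/-- Clique equivalence: `u` and `v` dominate each other. -/
def cliqueSetoid {n : ℕ} (E : Fin n → Fin n → Prop) : Setoid (Fin n) where
  r u v := gdom E u v ∧ gdom E v u
  iseqv := ⟨fun _ => ⟨Relation.ReflTransGen.refl, Relation.ReflTransGen.refl⟩,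
    fun h => ⟨h.2, h.1⟩,
    fun h₁ h₂ => ⟨h₁.1.trans h₂.1, h₂.2.trans h₁.2⟩⟩

/-- The set of classes `V′` of the reduced canonical form of `G`. -/
def Vred {n : ℕ} (E : Fin n → Fin n → Prop) : Type :=
  Quotient (cliqueSetoid E)

/-- The projection `π` from vertices to their classes. -/
def gpi {n : ℕ} (E : Fin n → Fin n → Prop) (v : Fin n) : Vred E :=
  Quotient.mk (cliqueSetoid E) v

/-- The order of the poset `P_G` on the classes: `π(v) ⪯ π(u)` iff `u` dominates `v`. -/
def ple {n : ℕ} (E : Fin n → Fin n → Prop) (a b : Vred E) : Prop :=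
  ∃ u v : Fin n, gpi E v = a ∧ gpi E u = b ∧ gdom E u v

/-- The weight `L(a)` of a class: the number of vertices in it. -/
noncomputable def lwt {n : ℕ} (E : Fin n → Fin n → Prop) (a : Vred E) : ℕ :=
  {v : Fin n | gpi E v = a}.ncard

/-- The height of `a` in `P_G`: the maximum cardinality of a chain of `P_G` having `a`
as its maximal element. -/
noncomputable def hgt {n : ℕ} (E : Fin n → Fin n → Prop) (a : Vred E) : ℕ :=
  sSup {k | ∃ c : Set (Vred E), c.ncard = k ∧ a ∈ c ∧ (∀ x ∈ c, ple E x a) ∧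
    ∀ x ∈ c, ∀ y ∈ c, ple E x y ∨ ple E y x}

/-- `P_G` is hierarchical: every element of height `i > 1` lies strictly above every
element of height `i − 1`. -/
def Hierarchical {n : ℕ} (E : Fin n → Fin n → Prop) : Prop :=
  ∀ a b : Vred E, 1 < hgt E a → hgt E b + 1 = hgt E a → (ple E b a ∧ b ≠ a)

/-- `G` satisfies the Unique Decomposition Property: any two subsets of a level of `P_G`
with the same total `L`-weight are matched by an `L`-preserving bijection. -/
def UDP {n : ℕ} (E : Fin n → Fin n → Prop) : Prop :=
  ∀ (i : ℕ) (S S' : Set (Vred E)),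
    S ⊆ {a | hgt E a = i} → S' ⊆ {a | hgt E a = i} →
    (∑ᶠ a ∈ S, lwt E a) = (∑ᶠ a ∈ S', lwt E a) →
    ∃ g : Vred E → Vred E, Set.BijOn g S S' ∧ ∀ a ∈ S, lwt E (g a) = lwt E a

/-- The number `A_i^G(C)` of elements of `C` of `G`-weight `i`. -/
noncomputable def Acount {n : ℕ} {F : Type*} [Field F] (E : Fin n → Fin n → Prop)
    (C : Set (Fin n → F)) (i : ℕ) : ℕ :=
  {c ∈ C | gweight E c = i}.ncard

/-- The dual code of `C` with respect to the standard dot product. -/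
def dualCode {n : ℕ} {F : Type*} [Field F] (C : Set (Fin n → F)) : Set (Fin n → F) :=
  {y | ∀ c ∈ C, ∑ i, c i * y i = 0}

/-!
Counting in two ways the pairs `(c, y)` with `c ∈ C`, `y` of a given `Ḡ`-weight and `c ⬝ᵥ y = 0`
expresses the weight distribution of `C^⊥` through those of the duals `c^⊥`. Together with
one-dimensional codes this shows that the MacWilliams Identity holds iff the `Ḡ`-weight
distribution of `x^⊥` depends only on the `G`-weight of `x`.

That distribution always depends only on the closure of `supp x`: for a `Ḡ`-closed set `Z`, the
number of words of `x^⊥` supported in `Z` is determined by whether the closure of `supp x` meets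
`Z`, and these numbers determine the others by Möbius inversion. For hierarchical `P_G`, two
closures of equal size contain the same weight of each level, so under UDP an automorphism of the
dominance relation carries one to the other.

Conversely, let `S` and `T` be subsets of a level of equal total weight, and suppose that some
`π(v) ∈ S` is lighter than every member of `T`. The characteristic words of `S` and `T` have the
same `G`-weight, and every word of the same `Ḡ`-weight as the unit word `e_v` vanishes on `T`, but
`e_v` is not orthogonal to the characteristic word of `S`. Hence the least weights in `S` and `T`
always agree, and UDP follows by removing elements of equal weight.
-/

section Counting

variable {α β : Type*}

theorem card_fiber_eq_iff_exists_equiv {γ : Type*} [Finite α] [Finite β] {f : α → γ} {g : β → γ} :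
    (∀ c, Nat.card {a // f a = c} = Nat.card {b // g b = c}) ↔
      ∃ e : α ≃ β, ∀ a, g (e a) = f a := by
  constructor
  · intro h
    have fiberEquiv : ∀ c, Nonempty ({a // f a = c} ≃ {b // g b = c}) := fun c =>
      Finite.card_eq.1 (h c)
    exact ⟨Equiv.ofFiberEquiv fun c => (fiberEquiv c).some, Equiv.ofFiberEquiv_map _⟩
  · rintro ⟨e, he⟩ c
    exact Nat.card_congr (e.subtypeEquiv fun a => by rw [he])

theorem card_le_eq_card_eq_add_card_lt {P : Type*} [PartialOrder P] [Finite α] (f : α → P)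
    (p : P) :
    Nat.card {a // f a ≤ p} = Nat.card {a // f a = p} + Nat.card {a // f a < p} := by
  have hunion : {a | f a ≤ p} = {a | f a = p} ∪ {a | f a < p} := by
    ext a
    exact le_iff_eq_or_lt
  have hdisj : Disjoint {a | f a = p} {a | f a < p} :=
    Set.disjoint_left.2 fun _ heq hlt => hlt.ne heq
  exact (congrArg Set.ncard hunion).trans (Set.ncard_union_eq hdisj)

theorem card_lt_eq_sum_card_fiber {P : Type*} [Preorder P] [Finite α] (f : α → P) (p : P)
    [Fintype (Set.Iio p)] :
    Nat.card {a // f a < p} = ∑ r : Set.Iio p, Nat.card {a // f a = r} := by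
  rw [← Nat.card_sigma]
  exact Nat.card_congr
    (Equiv.sigmaSubtypeFiberEquivSubtype f (q := (· ∈ Set.Iio p)) fun _ => Iff.rfl).symm

theorem card_fiber_eq_of_card_le_eq {P : Type*} [PartialOrder P] [Finite P] [Finite α] [Finite β]
    {f : α → P} {g : β → P}
    (h : ∀ p, Nat.card {a // f a ≤ p} = Nat.card {b // g b ≤ p}) (p : P) :
    Nat.card {a // f a = p} = Nat.card {b // g b = p} := by
  induction p using WellFoundedLT.induction with
  | ind p ih =>
    have hlt : Nat.card {a // f a < p} = Nat.card {b // g b < p} := by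
      have := Fintype.ofFinite (Set.Iio p)
      rw [card_lt_eq_sum_card_fiber, card_lt_eq_sum_card_fiber]
      exact Finset.sum_congr rfl fun r _ => ih r r.2
    have hle := h p
    rw [card_le_eq_card_eq_add_card_lt, card_le_eq_card_eq_add_card_lt, hlt] at hle
    exact Nat.add_right_cancel hle

theorem exists_bijOn_iff_card_filter_eq {γ : Type*} [DecidableEq γ] {L : α → γ} {S T : Finset α} :
    (∃ g : α → α, Set.BijOn g S T ∧ ∀ a ∈ S, L (g a) = L a) ↔
      ∀ l, ({a ∈ S | L a = l}).card = ({a ∈ T | L a = l}).card := by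
  classical
  constructor
  · rintro ⟨g, hg, hL⟩ l
    refine Finset.card_nbij g ?_ (hg.injOn.mono fun _ ha => Finset.mem_of_mem_filter _ ha) ?_
    · intro a ha
      obtain ⟨haS, rfl⟩ := Finset.mem_filter.1 ha
      exact Finset.mem_filter.2 ⟨hg.mapsTo haS, hL a haS⟩
    · intro b hb
      obtain ⟨hbT, rfl⟩ := Finset.mem_filter.1 hb
      obtain ⟨a, ha, rfl⟩ := hg.surjOn hbT
      exact ⟨a, Finset.mem_filter.2 ⟨ha, (hL a ha).symm⟩, rfl⟩
  · intro h
    have card_fiber (U : Finset α) (l : γ) :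
        Nat.card {a : U // L a = l} = ({a ∈ U | L a = l}).card := by
      rw [← Nat.card_eq_finsetCard]
      exact Nat.card_congr ((Equiv.subtypeSubtypeEquivSubtypeInter (· ∈ U) (L · = l)).trans
        (Equiv.subtypeEquivRight fun a => by rw [Finset.mem_filter]))
    obtain ⟨e, he⟩ := card_fiber_eq_iff_exists_equiv.1 fun l =>
      ((card_fiber S l).trans (h l)).trans (card_fiber T l).symm
    let g : α → α := fun a => if ha : a ∈ S then e ⟨a, ha⟩ else a
    have hg (a : S) : g a = e a := dif_pos a.2
    refine ⟨g, ⟨fun a ha => ?_, fun a ha b hb hab => ?_, fun b hb => ?_⟩, fun a ha => ?_⟩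
    · exact hg ⟨a, ha⟩ ▸ (e ⟨a, ha⟩).2
    · exact congrArg Subtype.val (e.injective (Subtype.ext
        ((hg ⟨a, ha⟩).symm.trans (hab.trans (hg ⟨b, hb⟩)))))
    · exact ⟨e.symm ⟨b, hb⟩, (e.symm ⟨b, hb⟩).2, by rw [hg, e.apply_symm_apply]⟩
    · rw [hg ⟨a, ha⟩]
      exact he ⟨a, ha⟩

theorem exists_perm_of_card_filter_eq [Finite α] {γ : Type*} [DecidableEq γ] {κ : α → γ}
    {A B : Finset α} (h : ∀ c, ({a ∈ A | κ a = c}).card = ({b ∈ B | κ b = c}).card) :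
    ∃ τ : Equiv.Perm α, ∀ a, κ (τ a) = κ a ∧ (τ a ∈ B ↔ a ∈ A) := by
  classical
  have := Fintype.ofFinite α
  have card_fiber (U : Finset α) (c : γ) (b : Bool) :
      Nat.card {a // (κ a, decide (a ∈ U)) = (c, b)} =
        if b then ({a ∈ U | κ a = c}).card else ({a ∈ Uᶜ | κ a = c}).card := by
    rw [Nat.card_eq_fintype_card, Fintype.card_subtype]
    cases b <;> simp only [if_true, Bool.false_eq_true, if_false] <;> congr 1 <;> ext a <;>
      simp [and_comm]
  have card_compl (c : γ) : ({a ∈ Aᶜ | κ a = c}).card = ({b ∈ Bᶜ | κ b = c}).card := by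
    have card_add (U : Finset α) : ({a ∈ U | κ a = c}).card + ({a ∈ Uᶜ | κ a = c}).card =
        ({a | κ a = c} : Finset α).card := by
      rw [← Finset.card_union_of_disjoint, ← Finset.filter_union, Finset.union_compl]
      exact Finset.disjoint_filter_filter disjoint_compl_right
    have hA := card_add A
    have hB := card_add B
    have hc := h c
    omega
  obtain ⟨τ, hτ⟩ := (card_fiber_eq_iff_exists_equiv (f := fun a => (κ a, decide (a ∈ A)))
    (g := fun b => (κ b, decide (b ∈ B)))).1 fun ⟨c, b⟩ => by
      rw [card_fiber, card_fiber, h, card_compl]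
  exact ⟨τ, fun a => by simpa using hτ a⟩

theorem card_filter_eq_of_erase [DecidableEq α] {γ : Type*} [DecidableEq γ] {L : α → γ}
    {S T : Finset α} {a b : α} (ha : a ∈ S) (hb : b ∈ T) (hab : L a = L b) {l : γ}
    (h : ({x ∈ S.erase a | L x = l}).card = ({x ∈ T.erase b | L x = l}).card) :
    ({x ∈ S | L x = l}).card = ({x ∈ T | L x = l}).card := by
  rw [Finset.card_filter, Finset.card_filter] at *
  rw [← Finset.add_sum_erase S _ ha, ← Finset.add_sum_erase T _ hb, h, hab]

theorem card_filter_eq_of_sum_eq {P : α → Prop} {L : α → ℕ} (hL : ∀ a, 0 < L a)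
    (hmin : ∀ S T : Finset α, (∀ a ∈ S, P a) → (∀ b ∈ T, P b) → ∑ a ∈ S, L a = ∑ b ∈ T, L b →
      T.Nonempty → ∀ a ∈ S, ∃ b ∈ T, L b ≤ L a)
    (S T : Finset α) (hS : ∀ a ∈ S, P a) (hT : ∀ b ∈ T, P b)
    (hsum : ∑ a ∈ S, L a = ∑ b ∈ T, L b) (l : ℕ) :
    ({a ∈ S | L a = l}).card = ({b ∈ T | L b = l}).card := by
  classical
  have sum_pos {U : Finset α} (hU : U.Nonempty) : 0 < ∑ a ∈ U, L a :=
    Finset.sum_pos (fun a _ => hL a) hU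
  induction S using Finset.strongInduction generalizing T with
  | H S ih =>
    rcases S.eq_empty_or_nonempty with rfl | hSne
    · rcases T.eq_empty_or_nonempty with rfl | hTne
      · rfl
      · exact absurd hsum (sum_pos hTne).ne
    have hTne : T.Nonempty := by
      rw [Finset.nonempty_iff_ne_empty]
      rintro rfl
      exact (sum_pos hSne).ne' hsum
    -- By `hmin` the least weights in `S` and `T` agree, so elements attaining them can be removed.
    obtain ⟨a, ha, hamin⟩ := S.exists_min_image L hSne
    obtain ⟨b, hb, hbmin⟩ := T.exists_min_image L hTne
    have hab : L a = L b := by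
      obtain ⟨b', hb', hle⟩ := hmin S T hS hT hsum hTne a ha
      obtain ⟨a', ha', hle'⟩ := hmin T S hT hS hsum.symm hSne b hb
      exact le_antisymm ((hamin a' ha').trans hle') ((hbmin b' hb').trans hle)
    rw [← Finset.add_sum_erase S L ha, ← Finset.add_sum_erase T L hb, hab] at hsum
    exact card_filter_eq_of_erase ha hb hab (ih _ (Finset.erase_ssubset ha) _
      (fun x hx => hS x (Finset.mem_of_mem_erase hx))
      (fun x hx => hT x (Finset.mem_of_mem_erase hx)) (Nat.add_left_cancel hsum))

theorem sum_filter_height_le_of_sum_eq {h L : α → ℕ} {A B : Finset α}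
    (hA : ∀ a ∈ A, ∀ b, h b < h a → b ∈ A) (hB : ∀ a ∈ B, ∀ b, h b < h a → b ∈ B)
    (hsum : ∑ a ∈ A, L a = ∑ b ∈ B, L b) (k : ℕ) :
    ∑ b ∈ B with h b = k, L b ≤ ∑ a ∈ A with h a = k, L a := by
  by_contra! hlt
  -- If `A` had an element above level `k`, it would contain all of level `k`.
  have hA_le : ∀ a ∈ A, h a ≤ k := by
    by_contra! ⟨a, ha, hka⟩
    refine hlt.not_ge (Finset.sum_le_sum_of_subset fun b hb => ?_)
    obtain ⟨-, rfl⟩ := Finset.mem_filter.1 hb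
    exact Finset.mem_filter.2 ⟨hA a ha b hka, rfl⟩
  obtain ⟨b, hb⟩ : ({b ∈ B | h b = k}).Nonempty := by
    rw [Finset.nonempty_iff_ne_empty]
    intro hempty
    simp [hempty] at hlt
  obtain ⟨hbB, rfl⟩ := Finset.mem_filter.1 hb
  have hrest : ∑ a ∈ A with ¬h a = h b, L a ≤ ∑ b' ∈ B with ¬h b' = h b, L b' := by
    refine Finset.sum_le_sum_of_subset fun a ha => ?_
    obtain ⟨haA, hne⟩ := Finset.mem_filter.1 ha
    exact Finset.mem_filter.2 ⟨hB b hbB a ((hA_le a haA).lt_of_ne hne), hne⟩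
  rw [← Finset.sum_filter_add_sum_filter_not A (h · = h b),
    ← Finset.sum_filter_add_sum_filter_not B (h · = h b)] at hsum
  omega

end Counting

section Functionals

variable {F : Type*} [Field F]

theorem card_field_mul_card_zeros {V : Type*} [AddCommGroup V] [Module F V] {f : V →ₗ[F] F}
    (hf : f ≠ 0) : Nat.card F * Nat.card {v // f v = 0} = Nat.card V := by
  rw [mul_comm, ← Nat.card_congr (f.quotKerEquivOfSurjective (LinearMap.surjective hf)).toEquiv]
  exact (Submodule.card_eq_card_quotient_mul_card (LinearMap.ker f)).symm

theorem card_zeros_eq_of_eq_zero_iff [Finite F] {V : Type*} [AddCommGroup V] [Module F V]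
    {f g : V →ₗ[F] F} (hfg : f = 0 ↔ g = 0) :
    Nat.card {v // f v = 0} = Nat.card {v // g v = 0} := by
  by_cases hf : f = 0
  · rw [hf, hfg.1 hf]
  · refine Nat.eq_of_mul_eq_mul_left (Nat.card_pos (α := F)) ?_
    rw [card_field_mul_card_zeros hf, card_field_mul_card_zeros (mt hfg.2 hf)]

theorem card_field_mul_sum_card_zeros {V ι : Type*} [AddCommGroup V] [Module F V] [Fintype V]
    [Finite ι] (f : ι → V →ₗ[F] F) :
    Nat.card F * ∑ v, Nat.card {t // f t v = 0} =
      Nat.card V * (Nat.card F * Nat.card {t // f t = 0} + Nat.card {t // f t ≠ 0}) := by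
  classical
  have := Fintype.ofFinite ι
  have hcount (t : ι) : Nat.card F * Nat.card {v // f t v = 0} =
      if f t = 0 then Nat.card V * Nat.card F else Nat.card V := by
    split_ifs with ht
    · simp [ht, mul_comm]
    · exact card_field_mul_card_zeros ht
  have hswap : ∑ v, Nat.card {t // f t v = 0} = ∑ t, Nat.card {v // f t v = 0} := by
    simp only [Nat.card_eq_fintype_card, Fintype.card_subtype]
    exact Finset.sum_card_bipartiteAbove_eq_sum_card_bipartiteBelow fun v t => f t v = 0
  rw [hswap, Finset.mul_sum, Finset.sum_congr rfl fun t _ => hcount t, Finset.sum_ite]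
  simp only [Finset.sum_const, smul_eq_mul, Nat.card_eq_fintype_card, Fintype.card_subtype]
  ring

theorem card_zero_functionals_eq [Finite F] {V W ι : Type*} [AddCommGroup V] [Module F V]
    [AddCommGroup W] [Module F W] [Finite V] [Finite ι] {f : ι → V →ₗ[F] F} {g : ι → W →ₗ[F] F}
    (e : V ≃ W) (he : ∀ v, Nat.card {t // f t v = 0} = Nat.card {t // g t (e v) = 0}) :
    Nat.card {t // f t = 0} = Nat.card {t // g t = 0} := by
  have := Fintype.ofFinite V
  have := Fintype.ofEquiv V e
  have hf := card_field_mul_sum_card_zeros f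
  have hg := card_field_mul_sum_card_zeros g
  rw [← Equiv.sum_comp e, ← Finset.sum_congr rfl fun v _ => he v, ← Nat.card_congr e, hf] at hg
  have hq := Nat.eq_of_mul_eq_mul_left Nat.card_pos hg
  have card_compl (p : ι → Prop) : Nat.card {t // p t} + Nat.card {t // ¬p t} = Nat.card ι :=
    Set.ncard_add_ncard_compl {t | p t}
  have htotal := (card_compl (f · = 0)).trans (card_compl (g · = 0)).symm
  have hF : 1 < Nat.card F := Finite.one_lt_card
  zify at hq htotal hF ⊢
  refine mul_left_cancel₀ (sub_pos.2 hF).ne' ?_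
  linear_combination hq - htotal

theorem dotProduct_eq_zero_of_support_subset_iff {ι : Type*} [Fintype ι] {x : ι → F} {Z : Set ι} :
    (∀ y : ι → F, y.support ⊆ Z → x ⬝ᵥ y = 0) ↔ Disjoint x.support Z := by
  classical
  rw [Set.disjoint_left]
  constructor
  · intro h i hi hiZ
    refine hi ?_
    simpa using h (Pi.single i 1) (Pi.support_single_subset.trans (Set.singleton_subset_iff.2 hiZ))
  · intro h y hy
    refine Finset.sum_eq_zero fun i _ => mul_eq_zero.2 (or_iff_not_imp_left.2 fun hi => ?_)
    exact not_not.1 fun hyi => h hi (hy hyi)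

theorem card_orthogonal_supported_eq {ι : Type*} [Fintype ι] [Finite F] {x x' : ι → F}
    {Z : Set ι} (h : Disjoint x.support Z ↔ Disjoint x'.support Z) :
    Nat.card {y : ι → F // x ⬝ᵥ y = 0 ∧ y.support ⊆ Z} =
      Nat.card {y : ι → F // x' ⬝ᵥ y = 0 ∧ y.support ⊆ Z} := by
  let W : Submodule F (ι → F) := Submodule.pi Zᶜ fun _ => ⊥
  have mem_W {y : ι → F} : y ∈ W ↔ y.support ⊆ Z := by
    simp only [W, Submodule.mem_pi, Set.mem_compl_iff, Submodule.mem_bot, Set.subset_def,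
      Function.mem_support]
    exact forall_congr' fun i => not_imp_comm
  let φ (z : ι → F) : W →ₗ[F] F := (dotProductBilin F F z).domRestrict W
  have φ_eq_zero (z : ι → F) : φ z = 0 ↔ Disjoint z.support Z := by
    rw [← dotProduct_eq_zero_of_support_subset_iff, LinearMap.ext_iff, Subtype.forall]
    exact ⟨fun h y hy => h y (mem_W.2 hy), fun h y hy => h y (mem_W.1 hy)⟩
  have card_zeros (z : ι → F) :
      Nat.card {y : ι → F // z ⬝ᵥ y = 0 ∧ y.support ⊆ Z} = Nat.card {w : W // φ z w = 0} :=
    Nat.card_congr ((Equiv.subtypeEquivRight fun y => by rw [and_comm, mem_W]).trans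
      (Equiv.subtypeSubtypeEquivSubtypeInter (· ∈ W) (z ⬝ᵥ · = 0)).symm)
  rw [card_zeros, card_zeros]
  exact card_zeros_eq_of_eq_zero_iff (by rw [φ_eq_zero, φ_eq_zero, h])

end Functionals

section ReducedPoset

variable {n : ℕ} {E : Fin n → Fin n → Prop}

theorem gpi_surjective : Function.Surjective (gpi E) :=
  Quotient.exists_rep

instance : Finite (Vred E) :=
  Finite.of_surjective (gpi E) gpi_surjective

theorem gpi_eq_gpi_iff {u v : Fin n} : gpi E u = gpi E v ↔ gdom E u v ∧ gdom E v u :=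
  Quotient.eq (r := cliqueSetoid E)

theorem ple_gpi_iff {u v : Fin n} : ple E (gpi E v) (gpi E u) ↔ gdom E u v := by
  constructor
  · rintro ⟨u', v', hv, hu, h⟩
    exact ((gpi_eq_gpi_iff.1 hu).2.trans h).trans (gpi_eq_gpi_iff.1 hv).1
  · exact fun h => ⟨u, v, rfl, rfl, h⟩

/-- The poset `P_G` on the classes of a directed graph. -/
instance : PartialOrder (Vred E) where
  le := ple E
  le_refl := gpi_surjective.forall.2 fun _ => ple_gpi_iff.2 Relation.ReflTransGen.refl
  le_trans := by
    simp only [gpi_surjective.forall, ple_gpi_iff]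
    exact fun _ _ _ hvu hwv => hwv.trans hvu
  le_antisymm := by
    simp only [gpi_surjective.forall, ple_gpi_iff, gpi_eq_gpi_iff]
    exact fun _ _ hvu huv => ⟨huv, hvu⟩

theorem gpi_le_gpi_iff {u v : Fin n} : gpi E v ≤ gpi E u ↔ gdom E u v :=
  ple_gpi_iff

theorem ncard_preimage_gpi (S : Finset (Vred E)) :
    (gpi E ⁻¹' S).ncard = ∑ a ∈ S, lwt E a := by
  classical
  rw [Set.ncard_eq_toFinset_card', Finset.card_eq_sum_card_fiberwise (t := S) (f := gpi E)
    fun v hv => by simpa using hv]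
  refine Finset.sum_congr rfl fun a ha => ?_
  rw [lwt, Set.ncard_eq_toFinset_card']
  congr 1
  ext v
  simp only [Finset.mem_filter, Set.mem_toFinset, Set.mem_preimage, Finset.mem_coe,
    Set.mem_ofPred_eq, and_iff_right_iff_imp]
  rintro rfl
  exact ha

theorem lwt_pos (a : Vred E) : 0 < lwt E a := by
  obtain ⟨v, hv⟩ := gpi_surjective a
  exact (Set.ncard_pos).2 ⟨v, hv⟩

theorem isGreatest_hgt (a : Vred E) :
    IsGreatest {k | ∃ c, IsChain (· ≤ ·) c ∧ IsGreatest c a ∧ c.ncard = k} (hgt E a) := by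
  have hset : {k | ∃ c, IsChain (· ≤ ·) c ∧ IsGreatest c a ∧ c.ncard = k} =
      {k | ∃ c : Set (Vred E), c.ncard = k ∧ a ∈ c ∧ (∀ x ∈ c, ple E x a) ∧
        ∀ x ∈ c, ∀ y ∈ c, ple E x y ∨ ple E y x} := by
    ext k
    constructor
    · rintro ⟨c, hchain, ⟨hac, hle⟩, rfl⟩
      exact ⟨c, rfl, hac, fun x hx => hle hx, fun x hx y hy => hchain.total hx hy⟩
    · rintro ⟨c, rfl, hac, hle, htotal⟩
      exact ⟨c, fun x hx y hy _ => htotal x hx y hy, ⟨hac, fun x hx => hle x hx⟩, rfl⟩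
  have hbdd : BddAbove {k | ∃ c, IsChain (· ≤ ·) c ∧ IsGreatest c a ∧ c.ncard = k} := by
    refine ⟨Nat.card (Vred E), ?_⟩
    rintro _ ⟨c, -, -, rfl⟩
    exact Set.ncard_le_card c
  rw [hgt, ← hset]
  exact ⟨Nat.sSup_mem ⟨_, {a}, IsChain.singleton, isGreatest_singleton, rfl⟩ hbdd,
    fun _ => le_csSup hbdd⟩

theorem one_le_hgt (a : Vred E) : 1 ≤ hgt E a :=
  (isGreatest_hgt a).2 ⟨{a}, IsChain.singleton, isGreatest_singleton, Set.ncard_singleton a⟩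

theorem hgt_strictMono : StrictMono (hgt E) := by
  intro a b hab
  obtain ⟨c, hchain, ⟨-, hle⟩, hcard⟩ := (isGreatest_hgt a).1
  have hbc : b ∉ c := fun hb => hab.not_ge (hle hb)
  rw [← Nat.add_one_le_iff, ← hcard, ← Set.ncard_insert_of_notMem hbc]
  refine (isGreatest_hgt b).2 ⟨insert b c, hchain.insert fun x hx _ => ?_, ⟨?_, ?_⟩, rfl⟩
  · exact Or.inr ((hle hx).trans hab.le)
  · exact Set.mem_insert b c
  · exact Set.forall_mem_insert.2 ⟨le_rfl, fun x hx => (hle hx).trans hab.le⟩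

theorem exists_le_hgt_eq {a : Vred E} {k : ℕ} (hk : 1 ≤ k) (hka : k ≤ hgt E a) :
    ∃ b ≤ a, hgt E b = k := by
  -- A chain of `hgt E a` elements below `a` has distinct heights, so these fill `[1, hgt E a]`.
  obtain ⟨c, hchain, ⟨-, hle⟩, hcard⟩ := (isGreatest_hgt a).1
  have hinj : Set.InjOn (hgt E) c := by
    intro b hb b' hb' heq
    rcases hchain.total hb hb' with h | h
    · exact h.eq_of_not_lt fun hlt => (hgt_strictMono hlt).ne heq
    · exact (h.eq_of_not_lt fun hlt => (hgt_strictMono hlt).ne' heq).symm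
  have himage : hgt E '' c = Set.Icc 1 (hgt E a) := by
    refine Set.eq_of_subset_of_ncard_le ?_ ?_
    · rintro _ ⟨b, hb, rfl⟩
      exact ⟨one_le_hgt b, hgt_strictMono.monotone (hle hb)⟩
    · simp [hinj.ncard_image, hcard]
  obtain ⟨b, hb, hbk⟩ : k ∈ hgt E '' c := himage ▸ ⟨hk, hka⟩
  exact ⟨b, hle hb, hbk⟩

theorem Hierarchical.le_iff (hh : Hierarchical E) {a b : Vred E} :
    a ≤ b ↔ a = b ∨ hgt E a < hgt E b := by
  constructor
  · exact fun h => h.eq_or_lt.imp_right fun hlt => hgt_strictMono hlt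
  · rintro (rfl | hlt)
    · exact le_rfl
    · obtain ⟨c, hcb, hc⟩ := exists_le_hgt_eq (Nat.le_add_left 1 (hgt E a)) hlt
      have hac : a ≤ c := (hh c a (by have := one_le_hgt a; omega) hc.symm).1
      exact hac.trans hcb

theorem udp_iff_card_filter_eq : UDP E ↔ ∀ (i : ℕ) (S T : Finset (Vred E)),
    (∀ a ∈ S, hgt E a = i) → (∀ b ∈ T, hgt E b = i) → ∑ a ∈ S, lwt E a = ∑ b ∈ T, lwt E b →
    ∀ l, ({a ∈ S | lwt E a = l}).card = ({b ∈ T | lwt E b = l}).card := by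
  constructor
  · intro hU i S T hS hT hsum
    exact exists_bijOn_iff_card_filter_eq.1 (hU i S T hS hT
      (by rw [finsum_mem_coe_finset, finsum_mem_coe_finset, hsum]))
  · intro h i S T hS hT hsum
    lift S to Finset (Vred E) using S.toFinite
    lift T to Finset (Vred E) using T.toFinite
    rw [finsum_mem_coe_finset, finsum_mem_coe_finset] at hsum
    exact exists_bijOn_iff_card_filter_eq.2 (h i S T hS hT hsum)

theorem UDP.exists_perm_vred (hU : UDP E) (hh : Hierarchical E) {A B : Finset (Vred E)}
    (hA : IsLowerSet (A : Set (Vred E))) (hB : IsLowerSet (B : Set (Vred E)))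
    (hsum : ∑ a ∈ A, lwt E a = ∑ b ∈ B, lwt E b) :
    ∃ τ : Equiv.Perm (Vred E), ∀ a,
      hgt E (τ a) = hgt E a ∧ lwt E (τ a) = lwt E a ∧ (τ a ∈ B ↔ a ∈ A) := by
  have mem_of_hgt_lt {U : Finset (Vred E)} (hU : IsLowerSet (U : Set (Vred E))) :
      ∀ a ∈ U, ∀ b, hgt E b < hgt E a → b ∈ U :=
    fun a ha b hba => hU (hh.le_iff.2 (Or.inr hba)) ha
  have hlevel (k : ℕ) : ∑ a ∈ A with hgt E a = k, lwt E a = ∑ b ∈ B with hgt E b = k, lwt E b :=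
    le_antisymm
      (sum_filter_height_le_of_sum_eq (mem_of_hgt_lt hB) (mem_of_hgt_lt hA) hsum.symm k)
      (sum_filter_height_le_of_sum_eq (mem_of_hgt_lt hA) (mem_of_hgt_lt hB) hsum k)
  obtain ⟨τ, hτ⟩ := exists_perm_of_card_filter_eq (κ := fun a => (hgt E a, lwt E a))
    (A := A) (B := B) fun ⟨k, l⟩ => by
      simpa only [Finset.filter_filter, Prod.mk.injEq] using
        udp_iff_card_filter_eq.1 hU k _ _ (fun a ha => (Finset.mem_filter.1 ha).2)
          (fun b hb => (Finset.mem_filter.1 hb).2) (hlevel k) l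
  exact ⟨τ, fun a => by simpa [and_assoc] using hτ a⟩

theorem exists_perm_gpi_apply_eq {τ : Equiv.Perm (Vred E)} (hτ : ∀ a, lwt E (τ a) = lwt E a) :
    ∃ σ : Equiv.Perm (Fin n), ∀ v, gpi E (σ v) = τ (gpi E v) := by
  refine card_fiber_eq_iff_exists_equiv.1 fun a => ?_
  simp only [← Equiv.eq_symm_apply]
  exact (hτ (τ.symm a)).symm.trans (congrArg (lwt E) (τ.apply_symm_apply a))

end ReducedPoset

section Closure

variable {n : ℕ} {E : Fin n → Fin n → Prop}

theorem gdom_flip {u v : Fin n} : gdom (flip E) u v ↔ gdom E v u :=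
  Relation.reflTransGen_swap

theorem gclosure_eq_preimage_lowerClosure (X : Set (Fin n)) :
    gclosure E X = gpi E ⁻¹' lowerClosure (gpi E '' X) := by
  ext v
  simp only [Set.mem_preimage, SetLike.mem_coe, mem_lowerClosure, Set.exists_mem_image,
    gpi_le_gpi_iff]
  rfl

theorem gclosure_subset_iff {X Y : Set (Fin n)} :
    gclosure E X ⊆ Y ↔ X ⊆ {u | ∀ v, gdom E u v → v ∈ Y} :=
  ⟨fun h u hu _ huv => h ⟨u, hu, huv⟩, fun h _ ⟨_, hu, huv⟩ => h hu _ huv⟩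

theorem disjoint_gclosure_iff {X Z : Set (Fin n)} :
    Disjoint (gclosure E X) Z ↔ Disjoint X (gclosure (flip E) Z) := by
  simp only [Set.disjoint_left]
  exact ⟨fun h u hu ⟨v, hv, hvu⟩ => h ⟨u, hu, gdom_flip.1 hvu⟩ hv,
    fun h v ⟨u, hu, huv⟩ hv => h hu ⟨v, hv, gdom_flip.2 huv⟩⟩

theorem gclosure_preimage_perm {σ : Equiv.Perm (Fin n)}
    (hσ : ∀ u v, gdom E (σ u) (σ v) ↔ gdom E u v) (X : Set (Fin n)) :
    gclosure E (σ ⁻¹' X) = σ ⁻¹' gclosure E X := by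
  ext v
  refine ⟨fun ⟨u, hu, huv⟩ => ⟨σ u, hu, (hσ u v).2 huv⟩, fun ⟨u, hu, huv⟩ => ?_⟩
  obtain ⟨u, rfl⟩ := σ.surjective u
  exact ⟨u, hu, (hσ u v).1 huv⟩

theorem UDP.exists_perm (hU : UDP E) (hh : Hierarchical E) {X Y : Set (Fin n)}
    (hcard : (gclosure E X).ncard = (gclosure E Y).ncard) :
    ∃ σ : Equiv.Perm (Fin n), (∀ u v, gdom E (σ u) (σ v) ↔ gdom E u v) ∧
      σ ⁻¹' gclosure E Y = gclosure E X := by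
  have exists_finset (X : Set (Fin n)) :
      ∃ A : Finset (Vred E), IsLowerSet (A : Set (Vred E)) ∧ gclosure E X = gpi E ⁻¹' A := by
    refine ⟨(Set.toFinite (lowerClosure (gpi E '' X) : Set (Vred E))).toFinset, ?_, ?_⟩ <;>
      rw [Set.Finite.coe_toFinset]
    · exact (lowerClosure (gpi E '' X)).lower
    · exact gclosure_eq_preimage_lowerClosure X
  obtain ⟨A, hA, hXA⟩ := exists_finset X
  obtain ⟨B, hB, hYB⟩ := exists_finset Y
  rw [hXA, hYB, ncard_preimage_gpi, ncard_preimage_gpi] at hcard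
  obtain ⟨τ, hτ⟩ := hU.exists_perm_vred hh hA hB hcard
  obtain ⟨σ, hσ⟩ := exists_perm_gpi_apply_eq fun a => (hτ a).2.1
  refine ⟨σ, fun u v => ?_, ?_⟩
  · simp only [← gpi_le_gpi_iff, hh.le_iff, hσ, (hτ _).1, τ.injective.eq_iff]
  · ext v
    simp only [hXA, hYB, Set.mem_preimage, Finset.mem_coe, hσ, (hτ _).2.2]

theorem Hierarchical.ncard_gclosure_preimage_gpi (hh : Hierarchical E) {i : ℕ}
    {S : Finset (Vred E)} (hS : ∀ a ∈ S, hgt E a = i) (hne : S.Nonempty) :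
    (gclosure E (gpi E ⁻¹' S)).ncard = {v | hgt E (gpi E v) < i}.ncard + ∑ a ∈ S, lwt E a := by
  have hclosure : gclosure E (gpi E ⁻¹' S) = {v | hgt E (gpi E v) < i} ∪ gpi E ⁻¹' S := by
    rw [gclosure_eq_preimage_lowerClosure, Set.image_preimage_eq _ gpi_surjective]
    ext v
    simp only [Set.mem_preimage, SetLike.mem_coe, mem_lowerClosure, Set.mem_union,
      Set.mem_ofPred_eq, hh.le_iff]
    constructor
    · rintro ⟨a, ha, rfl | hlt⟩
      · exact Or.inr ha
      · exact Or.inl (hS a ha ▸ hlt)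
    · rintro (hlt | hv)
      · obtain ⟨a, ha⟩ := hne
        exact ⟨a, ha, Or.inr ((hS a ha).symm ▸ hlt)⟩
      · exact ⟨_, hv, Or.inl rfl⟩
  rw [hclosure, Set.ncard_union_eq, ncard_preimage_gpi]
  exact Set.disjoint_left.2 fun v (hlt : hgt E (gpi E v) < i) hv => hlt.ne (hS _ hv)

theorem Hierarchical.ncard_gclosure_flip_singleton (hh : Hierarchical E) (v : Fin n) :
    (gclosure (flip E) {v}).ncard =
      lwt E (gpi E v) + {u | hgt E (gpi E v) < hgt E (gpi E u)}.ncard := by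
  have hclosure : gclosure (flip E) {v} =
      {u | gpi E u = gpi E v} ∪ {u | hgt E (gpi E v) < hgt E (gpi E u)} := by
    ext u
    change (∃ w ∈ ({v} : Set (Fin n)), gdom (flip E) w u) ↔ _
    simp only [Set.mem_singleton_iff, exists_eq_left, gdom_flip]
    rw [← gpi_le_gpi_iff, hh.le_iff, eq_comm]
    rfl
  rw [hclosure, Set.ncard_union_eq, lwt]
  exact Set.disjoint_left.2 fun u (hu : gpi E u = gpi E v)
    (hlt : hgt E (gpi E v) < hgt E (gpi E u)) => hlt.ne' (congrArg (hgt E) hu)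

end Closure

section Codes

variable {n : ℕ} {F : Type*} [Field F] {E : Fin n → Fin n → Prop}

theorem mem_dualCode_singleton {x y : Fin n → F} : y ∈ dualCode {x} ↔ x ⬝ᵥ y = 0 := by
  simp only [dualCode, Set.mem_singleton_iff, forall_eq, dotProduct, Set.mem_ofPred_eq]

theorem dualCode_span_singleton (x : Fin n → F) :
    dualCode (Submodule.span F {x} : Set (Fin n → F)) = dualCode {x} := by
  ext y
  rw [mem_dualCode_singleton]
  constructor
  · exact fun h => h x (Submodule.mem_span_singleton_self x)
  · rintro h _ hc
    obtain ⟨a, rfl⟩ := Submodule.mem_span_singleton.1 hc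
    exact (smul_dotProduct a x y).trans (by rw [h, smul_zero])

theorem gweight_smul {a : F} (ha : a ≠ 0) (x : Fin n → F) : gweight E (a • x) = gweight E x :=
  congrArg (fun s => (gclosure E s).ncard) (Function.support_const_smul_of_ne_zero a x ha)

theorem gweight_eq_zero_iff {x : Fin n → F} : gweight E x = 0 ↔ x = 0 := by
  rw [gweight, Set.ncard_eq_zero]
  constructor
  · intro h
    ext i
    by_contra hi
    exact Set.eq_empty_iff_forall_notMem.1 h i ⟨i, hi, Relation.ReflTransGen.refl⟩
  · rintro rfl
    exact Set.eq_empty_iff_forall_notMem.2 fun v ⟨u, hu, _⟩ => hu rfl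

theorem Acount_eq_card_codewords (C : Set (Fin n → F)) (j : ℕ) :
    Acount E C j = Nat.card {c : C // gweight E (c : Fin n → F) = j} :=
  Nat.card_congr (Equiv.subtypeSubtypeEquivSubtypeInter (· ∈ C) (gweight E · = j)).symm

theorem Acount_eq_card_words (C : Set (Fin n → F)) (j : ℕ) :
    Acount E C j = Nat.card {y : {y : Fin n → F // gweight E y = j} // (y : Fin n → F) ∈ C} :=
  Nat.card_congr ((Equiv.subtypeEquivRight fun _ => and_comm).trans
    (Equiv.subtypeSubtypeEquivSubtypeInter (gweight E · = j) (· ∈ C)).symm)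

theorem Acount_eq_iff_exists_equiv [Finite F] {C C' : Set (Fin n → F)} :
    (∀ j, Acount E C j = Acount E C' j) ↔
      ∃ e : C ≃ C', ∀ c, gweight E (e c : Fin n → F) = gweight E (c : Fin n → F) := by
  simp only [Acount_eq_card_codewords]
  exact card_fiber_eq_iff_exists_equiv

theorem Acount_dualCode_singleton_eq_of_gclosure_eq [Finite F] {x x' : Fin n → F}
    (h : gclosure E x.support = gclosure E x'.support) (j : ℕ) :
    Acount (flip E) (dualCode {x}) j = Acount (flip E) (dualCode {x'}) j := by
  have card_gclosure_le (Y : Set (Fin n)) :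
      Nat.card {y : dualCode {x} // gclosure (flip E) (Function.support y.1) ⊆ Y} =
        Nat.card {y : dualCode {x'} // gclosure (flip E) (Function.support y.1) ⊆ Y} := by
    -- `Z` is the largest subset of `Y` closed in the reverse graph.
    let Z : Set (Fin n) := {u | ∀ v, gdom (flip E) u v → v ∈ Y}
    have gclosure_Z : gclosure (flip E) Z = Z :=
      Set.Subset.antisymm
        (gclosure_subset_iff.2 fun _ hu _ huv w hvw => hu w (Relation.ReflTransGen.trans huv hvw))
        fun u hu => ⟨u, hu, Relation.ReflTransGen.refl⟩
    have disjoint_Z (z : Fin n → F) :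
        Disjoint z.support Z ↔ Disjoint (gclosure E z.support) Z := by
      rw [disjoint_gclosure_iff, gclosure_Z]
    have card_orthogonal (z : Fin n → F) :
        Nat.card {y : dualCode {z} // gclosure (flip E) (Function.support y.1) ⊆ Y} =
          Nat.card {y : Fin n → F // z ⬝ᵥ y = 0 ∧ y.support ⊆ Z} :=
      Nat.card_congr ((Equiv.subtypeSubtypeEquivSubtypeInter (· ∈ dualCode {z})
        (fun y => gclosure (flip E) y.support ⊆ Y)).trans (Equiv.subtypeEquivRight fun y => by
          rw [mem_dualCode_singleton, gclosure_subset_iff]))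
    rw [card_orthogonal, card_orthogonal]
    exact card_orthogonal_supported_eq (by rw [disjoint_Z, disjoint_Z, h])
  obtain ⟨e, he⟩ := card_fiber_eq_iff_exists_equiv.1 (card_fiber_eq_of_card_le_eq card_gclosure_le)
  exact Acount_eq_iff_exists_equiv.2 ⟨e, fun y => congrArg Set.ncard (he y)⟩ j

theorem Acount_dualCode_singleton_comp_perm [Finite F] {σ : Equiv.Perm (Fin n)}
    (hσ : ∀ u v, gdom E (σ u) (σ v) ↔ gdom E u v) (x : Fin n → F) (j : ℕ) :
    Acount (flip E) (dualCode {x ∘ σ}) j = Acount (flip E) (dualCode {x}) j := by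
  have hσ_flip (u v : Fin n) : gdom (flip E) (σ u) (σ v) ↔ gdom (flip E) u v := by
    rw [gdom_flip, gdom_flip, hσ]
  refine (Acount_eq_iff_exists_equiv.2 ⟨(σ.arrowCongr (Equiv.refl F)).symm.subtypeEquiv
    fun y => ?_, fun y => ?_⟩ j).symm
  · rw [mem_dualCode_singleton, mem_dualCode_singleton]
    exact Eq.congr_left (Equiv.sum_comp σ fun i => x i * y i).symm
  · change (gclosure (flip E) (σ ⁻¹' Function.support y.1)).ncard = _
    rw [gclosure_preimage_perm hσ_flip, Set.ncard_preimage_of_injective_subset_range σ.injective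
      (by simp [σ.surjective.range_eq])]
    rfl

/-- The MacWilliams Identity for the graph with edge relation `E` over `F`: the weight enumerator
of a linear code determines the one of its dual with respect to the reverse graph. Enumerators are
compared coefficientwise. -/
def MacWilliamsIdentity (F : Type*) [Field F] (E : Fin n → Fin n → Prop) : Prop :=
  ∀ C₁ C₂ : Submodule F (Fin n → F),
    (∀ i : ℕ, Acount E (C₁ : Set (Fin n → F)) i = Acount E (C₂ : Set (Fin n → F)) i) →
    (∀ i : ℕ, Acount (flip E) (dualCode (C₁ : Set (Fin n → F))) i =
      Acount (flip E) (dualCode (C₂ : Set (Fin n → F))) i)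

theorem Acount_span_singleton_eq_of_gweight_eq [Finite F] {x x' : Fin n → F}
    (h : gweight E x = gweight E x') (i : ℕ) :
    Acount E (Submodule.span F {x} : Set (Fin n → F)) i =
      Acount E (Submodule.span F {x'} : Set (Fin n → F)) i := by
  by_cases hx : x = 0
  · have hx' : x' = 0 := by rw [← gweight_eq_zero_iff (E := E), ← h, gweight_eq_zero_iff, hx]
    rw [hx, hx']
  have hx' : x' ≠ 0 := by rwa [Ne, ← gweight_eq_zero_iff (E := E), ← h, gweight_eq_zero_iff]
  let toSpan {z : Fin n → F} (hz : z ≠ 0) := (LinearEquiv.toSpanNonzeroSingleton F _ z hz).toEquiv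
  refine Acount_eq_iff_exists_equiv.2 ⟨(toSpan hx).symm.trans (toSpan hx'),
    (toSpan hx).surjective.forall.2 fun a => ?_⟩ i
  rw [Equiv.trans_apply, Equiv.symm_apply_apply]
  change gweight E (a • x') = gweight E (a • x)
  rcases eq_or_ne a 0 with rfl | ha
  · rw [zero_smul, zero_smul]
  · rw [gweight_smul ha, gweight_smul ha, h]

theorem macWilliamsIdentity_iff_Acount_dualCode_singleton_eq [Finite F] : MacWilliamsIdentity F E ↔
    ∀ x x' : Fin n → F, gweight E x = gweight E x' →
      ∀ j, Acount (flip E) (dualCode {x}) j = Acount (flip E) (dualCode {x'}) j := by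
  constructor
  · intro hM x x' h j
    rw [← dualCode_span_singleton x, ← dualCode_span_singleton x']
    exact hM _ _ (Acount_span_singleton_eq_of_gweight_eq h) j
  · intro h C₁ C₂ hC j
    obtain ⟨e, he⟩ := Acount_eq_iff_exists_equiv.1 hC
    let φ (C : Submodule F (Fin n → F)) (y : {y : Fin n → F // gweight (flip E) y = j}) :
        C →ₗ[F] F := ((dotProductBilin F F).flip y.1).domRestrict C
    have card_zero (C : Submodule F (Fin n → F)) :
        Nat.card {y // φ C y = 0} = Acount (flip E) (dualCode (C : Set (Fin n → F))) j := by
      rw [Acount_eq_card_words]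
      refine Nat.card_congr (Equiv.subtypeEquivRight fun y => ?_)
      rw [LinearMap.ext_iff, Subtype.forall]
      rfl
    have card_zero_at (C : Submodule F (Fin n → F)) (c : C) :
        Nat.card {y // φ C y c = 0} = Acount (flip E) (dualCode {(c : Fin n → F)}) j := by
      rw [Acount_eq_card_words]
      exact Nat.card_congr (Equiv.subtypeEquivRight fun y => mem_dualCode_singleton.symm)
    rw [← card_zero, ← card_zero]
    refine card_zero_functionals_eq e fun c => ?_
    rw [card_zero_at, card_zero_at]
    exact h c.1 (e c).1 (he c).symm j

theorem UDP.Acount_dualCode_singleton_eq [Finite F] (hU : UDP E) (hh : Hierarchical E)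
    {x x' : Fin n → F} (h : gweight E x = gweight E x') (j : ℕ) :
    Acount (flip E) (dualCode {x}) j = Acount (flip E) (dualCode {x'}) j := by
  obtain ⟨σ, hσ, hclosure⟩ := hU.exists_perm hh h
  rw [← Acount_dualCode_singleton_comp_perm hσ x']
  refine Acount_dualCode_singleton_eq_of_gclosure_eq ?_ j
  exact hclosure.symm.trans (gclosure_preimage_perm hσ _).symm

/-- The characteristic word of the union of the classes in `S`. These words test UDP against the
MacWilliams Identity. -/
noncomputable def classWord (F : Type*) [Field F] (S : Finset (Vred E)) : Fin n → F :=
  Set.indicator (gpi E ⁻¹' S) 1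

theorem support_classWord (S : Finset (Vred E)) : (classWord F S).support = gpi E ⁻¹' S := by
  rw [classWord, Set.support_indicator, Function.support_one, Set.inter_univ]

theorem gweight_classWord_eq (hh : Hierarchical E) {i : ℕ} {S T : Finset (Vred E)}
    (hS : ∀ a ∈ S, hgt E a = i) (hT : ∀ b ∈ T, hgt E b = i) (hSne : S.Nonempty)
    (hTne : T.Nonempty) (hsum : ∑ a ∈ S, lwt E a = ∑ b ∈ T, lwt E b) :
    gweight E (classWord F S) = gweight E (classWord F T) := by
  change (gclosure E (classWord F S).support).ncard = (gclosure E (classWord F T).support).ncard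
  rw [support_classWord, support_classWord, hh.ncard_gclosure_preimage_gpi hS hSne,
    hh.ncard_gclosure_preimage_gpi hT hTne, hsum]

theorem Hierarchical.lwt_le_of_gweight_flip_le (hh : Hierarchical E) {y : Fin n → F} {u v : Fin n}
    (hy : gweight (flip E) y ≤ gweight (flip E) (Pi.single v (1 : F))) (hu : y u ≠ 0)
    (huv : hgt E (gpi E u) = hgt E (gpi E v)) : lwt E (gpi E u) ≤ lwt E (gpi E v) := by
  have gweight_single : gweight (flip E) (Pi.single v (1 : F)) = (gclosure (flip E) {v}).ncard :=
    congrArg (fun s => (gclosure (flip E) s).ncard) (Pi.support_single_of_ne one_ne_zero)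
  have hsubset : gclosure (flip E) {u} ⊆ gclosure (flip E) {i | y i ≠ 0} := by
    rintro w ⟨_, rfl, huw⟩
    exact ⟨_, hu, huw⟩
  have hle := (Set.ncard_le_ncard hsubset).trans hy
  rw [gweight_single, hh.ncard_gclosure_flip_singleton, hh.ncard_gclosure_flip_singleton,
    huv] at hle
  exact Nat.le_of_add_le_add_right hle

theorem Hierarchical.exists_lwt_le [Finite F] (hh : Hierarchical E) {S T : Finset (Vred E)}
    (hcount : ∀ j, Acount (flip E) (dualCode {classWord F S}) j =
      Acount (flip E) (dualCode {classWord F T}) j)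
    {a : Vred E} (ha : a ∈ S) (hT : ∀ b ∈ T, hgt E b = hgt E a) :
    ∃ b ∈ T, lwt E b ≤ lwt E a := by
  by_contra! hlt
  obtain ⟨v, rfl⟩ := gpi_surjective a
  set j := gweight (flip E) (Pi.single v (1 : F)) with hj
  have mem_dual_T {y : Fin n → F} (hy : gweight (flip E) y = j) : y ∈ dualCode {classWord F T} := by
    rw [mem_dualCode_singleton]
    refine dotProduct_eq_zero_of_support_subset_iff.2 ?_ y subset_rfl
    rw [support_classWord]
    exact Set.disjoint_left.2 fun u hu hyu =>
      (hlt _ hu).not_ge (hh.lwt_le_of_gweight_flip_le (F := F) hy.le hyu (hT _ hu))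
  have hsubset : {y ∈ dualCode {classWord F S} | gweight (flip E) y = j} ⊆
      {y ∈ dualCode {classWord F T} | gweight (flip E) y = j} :=
    fun y hy => ⟨mem_dual_T hy.2, hy.2⟩
  have hsingle : Pi.single v 1 ∈ dualCode {classWord F S} :=
    ((Set.eq_of_subset_of_ncard_le hsubset (hcount j).ge).superset ⟨mem_dual_T hj.symm, hj.symm⟩).1
  rw [mem_dualCode_singleton, dotProduct_single_one] at hsingle
  have hv : v ∈ (classWord F S).support := support_classWord (F := F) S ▸ ha
  exact hv hsingle

theorem MacWilliamsIdentity.udp [Finite F] (hM : MacWilliamsIdentity F E) (hh : Hierarchical E) :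
    UDP E := by
  refine udp_iff_card_filter_eq.2 fun i => card_filter_eq_of_sum_eq lwt_pos ?_
  intro S T hS hT hsum hTne a ha
  have hweight := gweight_classWord_eq (F := F) hh hS hT ⟨a, ha⟩ hTne hsum
  exact hh.exists_lwt_le (macWilliamsIdentity_iff_Acount_dualCode_singleton_eq.1 hM _ _ hweight) ha
    fun b hb => (hT b hb).trans (hS a ha).symm

theorem UDP.macWilliamsIdentity [Finite F] (hU : UDP E) (hh : Hierarchical E) :
    MacWilliamsIdentity F E :=
  macWilliamsIdentity_iff_Acount_dualCode_singleton_eq.2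
    fun _ _ h => hU.Acount_dualCode_singleton_eq hh h

end Codes

/-- for a graph `G` whose reduced canonical form determines a hierarchical
poset, `G` admits the MacWilliams Identity — for all linear codes `C₁, C₂`, if the
`G`-weight enumerators of `C₁` and `C₂` coincide then the `Ḡ`-weight enumerators of the
dual codes coincide (`Ḡ` being the reverse graph `flip E`) — iff `G` satisfies the Unique
Decomposition Property. -/
theorem stmt_19 {n : ℕ} (hn : 1 ≤ n) {F : Type*} [Field F] [Fintype F]
    (E : Fin n → Fin n → Prop) (hE : Irreflexive E) (hh : Hierarchical E) :
    (∀ C₁ C₂ : Submodule F (Fin n → F),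
      (∀ i : ℕ, Acount E (C₁ : Set (Fin n → F)) i = Acount E (C₂ : Set (Fin n → F)) i) →
      (∀ i : ℕ, Acount (flip E) (dualCode (C₁ : Set (Fin n → F))) i =
        Acount (flip E) (dualCode (C₂ : Set (Fin n → F))) i)) ↔ UDP E :=
  ⟨fun hM => MacWilliamsIdentity.udp (F := F) hM hh, fun hU => hU.macWilliamsIdentity hh⟩
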